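/- Let M be an R-module of finite Gorenstein weak injective dimension. Then M is Gorenstein weak injective if and only if every GWI-copure exact sequence 0 → M → N → L → 0 splits, if and only if Hom_R(−, M) is exact on every GWI-copure exact sequence. -/

import Mathlib

open CategoryTheory

universe u

noncomputable section

variable (R : Type u) [Ring R]

/-- Vanishing of `Ext^n_R(N, M)` for left `R`-modules, expressed via the `Ext` bifunctor
on the `ℤ`-linear abelian category `ModuleCat R`. -/
def ExtVanish (n : ℕ) (N M : ModuleCat.{u} R) : Prop :=
  Subsingleton (((_root_.Ext ℤ (ModuleCat.{u} R) n).obj (Opposite.op N)).obj M)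

/-- An `R`-module is super finitely presented if it admits a resolution by
finitely generated projective modules. -/
def SuperFinitelyPresented (N : ModuleCat.{u} R) : Prop :=
  ∃ (F : ℕ → ModuleCat.{u} R) (d : ∀ n, F (n + 1) →ₗ[R] F n) (ε : F 0 →ₗ[R] N),
    (∀ n, Module.Finite R (F n)) ∧ (∀ n, Module.Projective R (F n)) ∧
    Function.Surjective ε ∧ Function.Exact (d 0) ε ∧
    (∀ n, Function.Exact (d (n + 1)) (d n))

/-- An `R`-module `W` is weak injective if `Ext^1_R(N, W) = 0` for every super finitely
presented module `N`. -/
def WeakInjective (W : ModuleCat.{u} R) : Prop :=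
  ∀ N : ModuleCat.{u} R, SuperFinitelyPresented R N → ExtVanish R 1 N W

/-- `wid_R M ≤ n` : `Ext^{n+1}_R(N, M) = 0` for every super finitely presented `N`. -/
def WidLE (M : ModuleCat.{u} R) (n : ℕ) : Prop :=
  ∀ N : ModuleCat.{u} R, SuperFinitelyPresented R N → ExtVanish R (n + 1) N M

/-- The weak injective dimension, as an element of `ℕ∞`. -/
def Wid (M : ModuleCat.{u} R) : ℕ∞ :=
  sInf {c : ℕ∞ | ∃ n : ℕ, c = n ∧ WidLE R M n}

/-- A doubly infinite exact complex of injective modules which stays exact after applying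
`Hom_R(W, -)` for every module `W` in the test class `𝒯`. -/
def IsTotallyAcyclicInjComplex (𝒯 : ModuleCat.{u} R → Prop)
    (I : ℤ → ModuleCat.{u} R) (d : ∀ n : ℤ, I n →ₗ[R] I (n + 1)) : Prop :=
  (∀ n, Module.Injective R (I n)) ∧
  (∀ n, Function.Exact (d n) (d (n + 1))) ∧
  (∀ W : ModuleCat.{u} R, 𝒯 W → ∀ n,
    Function.Exact (fun g : W →ₗ[R] I n => (d n).comp g)
      (fun g : W →ₗ[R] I (n + 1) => (d (n + 1)).comp g))

/-- `M` is Gorenstein injective relative to the test class `𝒯` : `M` is the cokernel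
`Coker (I_1 → I_0)` of a `Hom(𝒯, -)`-exact exact complex of injective modules. -/
def GorensteinRelInjective (𝒯 : ModuleCat.{u} R → Prop) (M : ModuleCat.{u} R) : Prop :=
  ∃ (I : ℤ → ModuleCat.{u} R) (d : ∀ n : ℤ, I n →ₗ[R] I (n + 1)) (π : I 0 →ₗ[R] M),
    IsTotallyAcyclicInjComplex R 𝒯 I d ∧
    Function.Surjective π ∧ Function.Exact (d (-1)) π

/-- Gorenstein weak injective modules: the test class is that of weak injective modules. -/
def GorensteinWeakInjective (M : ModuleCat.{u} R) : Prop :=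
  GorensteinRelInjective R (WeakInjective R) M

/-- Gorenstein injective modules: the test class is that of injective modules. -/
def GorensteinInjective (M : ModuleCat.{u} R) : Prop :=
  GorensteinRelInjective R (fun E => Module.Injective R E) M

/-- The data of an exact sequence `0 → M → G^0 → ⋯ → G^n → 0` (the modules `G^i` for
`i > n` being trivial). -/
def IsFiniteCoresolution (M : ModuleCat.{u} R) (n : ℕ) (G : ℕ → ModuleCat.{u} R)
    (d : ∀ i, G i →ₗ[R] G (i + 1)) (ε : M →ₗ[R] G 0) : Prop :=
  Function.Injective ε ∧ Function.Exact ε (d 0) ∧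
  (∀ i, Function.Exact (d i) (d (i + 1))) ∧
  (∀ i, n < i → ∀ x : G i, x = 0)

/-- `Gwid_R M ≤ n` : `M` has a coresolution of length `n` by Gorenstein weak injective
modules. -/
def GwidLE (M : ModuleCat.{u} R) (n : ℕ) : Prop :=
  ∃ (G : ℕ → ModuleCat.{u} R) (d : ∀ i, G i →ₗ[R] G (i + 1)) (ε : M →ₗ[R] G 0),
    IsFiniteCoresolution R M n G d ε ∧ ∀ i, GorensteinWeakInjective R (G i)

/-- The Gorenstein weak injective dimension, as an element of `ℕ∞`. -/
def Gwid (M : ModuleCat.{u} R) : ℕ∞ :=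
  sInf {c : ℕ∞ | ∃ n : ℕ, c = n ∧ GwidLE R M n}

/-- `Gid_R M ≤ n`, via coresolutions by Gorenstein injective modules. -/
def GidLE (M : ModuleCat.{u} R) (n : ℕ) : Prop :=
  ∃ (G : ℕ → ModuleCat.{u} R) (d : ∀ i, G i →ₗ[R] G (i + 1)) (ε : M →ₗ[R] G 0),
    IsFiniteCoresolution R M n G d ε ∧ ∀ i, GorensteinInjective R (G i)

/-- The Gorenstein injective dimension, as an element of `ℕ∞`. -/
def Gid (M : ModuleCat.{u} R) : ℕ∞ :=
  sInf {c : ℕ∞ | ∃ n : ℕ, c = n ∧ GidLE R M n}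

/-- `id_R M ≤ n`, via coresolutions by injective modules. -/
def IdLE (M : ModuleCat.{u} R) (n : ℕ) : Prop :=
  ∃ (G : ℕ → ModuleCat.{u} R) (d : ∀ i, G i →ₗ[R] G (i + 1)) (ε : M →ₗ[R] G 0),
    IsFiniteCoresolution R M n G d ε ∧ ∀ i, Module.Injective R (G i)

/-- The injective dimension, as an element of `ℕ∞`. -/
def Idim (M : ModuleCat.{u} R) : ℕ∞ :=
  sInf {c : ℕ∞ | ∃ n : ℕ, c = n ∧ IdLE R M n}

/-- The data of an exact sequence `0 → P_n → ⋯ → P_0 → M → 0`. -/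
def IsFiniteResolution (M : ModuleCat.{u} R) (n : ℕ) (P : ℕ → ModuleCat.{u} R)
    (d : ∀ i, P (i + 1) →ₗ[R] P i) (ε : P 0 →ₗ[R] M) : Prop :=
  Function.Surjective ε ∧ Function.Exact (d 0) ε ∧
  (∀ i, Function.Exact (d (i + 1)) (d i)) ∧
  (∀ i, n < i → ∀ x : P i, x = 0)

/-- `pd_R M ≤ n`, via resolutions by projective modules. -/
def PdLE (M : ModuleCat.{u} R) (n : ℕ) : Prop :=
  ∃ (P : ℕ → ModuleCat.{u} R) (d : ∀ i, P (i + 1) →ₗ[R] P i) (ε : P 0 →ₗ[R] M),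
    IsFiniteResolution R M n P d ε ∧ ∀ i, Module.Projective R (P i)

end

variable (R : Type u) [Ring R]

/-- A short exact sequence `0 → L → M → N → 0` of `R`-modules. -/
def ShortExactSeq (L M N : ModuleCat.{u} R) (f : L →ₗ[R] M) (g : M →ₗ[R] N) : Prop :=
  Function.Injective f ∧ Function.Surjective g ∧ Function.Exact f g

/-- Exactness of `0 → Hom(C, X) → Hom(B, X) → Hom(A, X) → 0` induced by
`0 → A → B → C → 0`. -/
def HomContraExact (X : ModuleCat.{u} R) {A B C : ModuleCat.{u} R}
    (f : A →ₗ[R] B) (g : B →ₗ[R] C) : Prop :=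
  Function.Injective (fun h : C →ₗ[R] X => h.comp g) ∧
  Function.Exact (fun h : C →ₗ[R] X => h.comp g) (fun h : B →ₗ[R] X => h.comp f) ∧
  Function.Surjective (fun h : B →ₗ[R] X => h.comp f)

/-- A short exact sequence is `GWI`-copure exact if `Hom_R(-, X)` leaves it exact for
every Gorenstein weak injective module `X`. -/
def GWICopureExact {A B C : ModuleCat.{u} R} (f : A →ₗ[R] B) (g : B →ₗ[R] C) : Prop :=
  ShortExactSeq R A B C f g ∧
  ∀ X : ModuleCat.{u} R, GorensteinWeakInjective R X → HomContraExact R X f g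

/-- `M` is `GWI`-copure injective if `Hom_R(-, M)` is exact on every `GWI`-copure exact
sequence. -/
def GWICopureInjectiveMod (M : ModuleCat.{u} R) : Prop :=
  ∀ (A B C : ModuleCat.{u} R) (f : A →ₗ[R] B) (g : B →ₗ[R] C),
    GWICopureExact R f g → HomContraExact R M f g

/-- `φ : M → G` is a Gorenstein weak injective preenvelope of `M`. -/
def GWIPreenvelope (M G : ModuleCat.{u} R) (φ : M →ₗ[R] G) : Prop :=
  GorensteinWeakInjective R G ∧
  ∀ G' : ModuleCat.{u} R, GorensteinWeakInjective R G' →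
    ∀ f : M →ₗ[R] G', ∃ g : G →ₗ[R] G', g.comp φ = f

/-- A `WI`-pure Tate injective resolution of `M` : an injective resolution
`0 → M → E^0 → E^1 → ⋯`, a `WI`-pure exact complex `T` of injectives, and a chain map
`u : E → T` which is an isomorphism in all sufficiently large degrees. -/
def WIPureTateInjectiveResolution (M : ModuleCat.{u} R)
    (E : ℕ → ModuleCat.{u} R) (dE : ∀ n, E n →ₗ[R] E (n + 1)) (ε : M →ₗ[R] E 0)
    (T : ℤ → ModuleCat.{u} R) (dT : ∀ n : ℤ, T n →ₗ[R] T (n + 1))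
    (u : ∀ n : ℕ, E n →ₗ[R] T n) : Prop :=
  (∀ n, Module.Injective R (E n)) ∧ Function.Injective ε ∧
  Function.Exact ε (dE 0) ∧ (∀ n, Function.Exact (dE n) (dE (n + 1))) ∧
  IsTotallyAcyclicInjComplex R (WeakInjective R) T dT ∧
  (∀ n : ℕ, (dT n).comp (u n) = (u (n + 1)).comp (dE n)) ∧
  ∃ N : ℕ, ∀ n, N ≤ n → Function.Bijective (u n)

/-- Vanishing of the relative Tate cohomology `Êxt^i_GWI(N, M)` for all `i ∈ ℤ`,
computed from the `WI`-pure exact complex `T` : the complex `Hom_R(N, T)` is exact. -/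
def ExtHatVanishesAll (N : ModuleCat.{u} R) (T : ℤ → ModuleCat.{u} R)
    (dT : ∀ n : ℤ, T n →ₗ[R] T (n + 1)) : Prop :=
  ∀ n : ℤ, Function.Exact (fun g : N →ₗ[R] T n => (dT n).comp g)
    (fun g : N →ₗ[R] T (n + 1) => (dT (n + 1)).comp g)

/-!
An object is Gorenstein injective relative to `𝒯` exactly when it lies in a class of objects
`Ext`-orthogonal to `𝒯` in which syzygies with respect to injectives can be chosen, because the
cosyzygies needed to continue a complex to the right exist automatically. When `𝒯` contains the
injectives, this coinductive description shows that the relative Gorenstein injectives are closed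
under extensions and retracts.

If `M` has finite relative Gorenstein injective dimension, then induction on the dimension gives a
short exact sequence `0 → M → G → L → 0` with `G` relative Gorenstein injective and
`Ext^i(L, X) = 0` for all `i ≥ 1` and all relative Gorenstein injective `X`. This sequence is
copure, so if copure sequences starting at `M` split, then `M` is a retract of `G`. Exactness of
`Hom(-, M)` on copure sequences forces such splittings, by extending the identity of `M`.
-/

section Abelian

open Limits

universe w v

variable {C : Type*} [Category.{v} C] [Abelian C]

/-- `B` is an extension of `D` by `A`: there is a short exact sequence `0 → A → B → D → 0`. -/
def IsExtension (A B D : C) : Prop :=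
  ∃ (f : A ⟶ B) (g : B ⟶ D) (w : f ≫ g = 0), (ShortComplex.mk f g w).ShortExact

/-- `X` is a first cosyzygy of `K`, equivalently `K` is a first syzygy of `X` with respect to
injective objects: there is a short exact sequence `0 → K → E → X → 0` with `E` injective. -/
def IsCosyzygy (K X : C) : Prop :=
  ∃ E : C, Injective E ∧ IsExtension K E X

section Extensions

lemma IsExtension.of_shortExact {S : ShortComplex C} (hS : S.ShortExact) :
    IsExtension S.X₁ S.X₂ S.X₃ :=
  ⟨S.f, S.g, S.zero, hS⟩

lemma isExtension_kernel {B D : C} (g : B ⟶ D) [Epi g] : IsExtension (kernel g) B D :=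
  ⟨kernel.ι g, g, kernel.condition g, { exact := ShortComplex.exact_kernel g }⟩

lemma isExtension_cokernel {A B : C} (f : A ⟶ B) [Mono f] : IsExtension A B (cokernel f) :=
  ⟨f, cokernel.π f, cokernel.condition f, { exact := ShortComplex.exact_cokernel f }⟩

lemma isExtension_of_isPullback {S : ShortComplex C} (hS : S.ShortExact) {P D : C}
    {b : P ⟶ S.X₂} {d : P ⟶ D} {k : D ⟶ S.X₃} (sq : IsPullback b d S.g k) :
    IsExtension S.X₁ P D := by
  have := hS.mono_f
  have := hS.epi_g
  have hfk : S.f ≫ S.g = (0 : S.X₁ ⟶ D) ≫ k := by rw [S.zero, zero_comp]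
  have hmono : Mono (sq.lift S.f 0 hfk) := mono_of_mono_fac (sq.lift_fst S.f 0 hfk)
  have hepi : Epi d := Abelian.epi_snd_of_isLimit _ _ sq.isLimit
  refine .of_shortExact (S := .mk (sq.lift S.f 0 hfk) d (sq.lift_snd _ _ _)) (.mk' ?_ hmono hepi)
  refine ShortComplex.exact_of_f_is_kernel _
    (KernelFork.IsLimit.ofι' _ _ fun {W} x (hx : x ≫ d = 0) => ?_)
  have hxb : (x ≫ b) ≫ S.g = 0 := by rw [Category.assoc, sq.w, reassoc_of% hx, zero_comp]
  refine ⟨hS.exact.lift (x ≫ b) hxb, sq.hom_ext ?_ ?_⟩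
  · rw [Category.assoc, sq.lift_fst, hS.exact.lift_f]
  · rw [Category.assoc, sq.lift_snd, comp_zero, hx]

lemma IsExtension.exists_pullback {A B A' B' D : C} (h : IsExtension A B D)
    (h' : IsExtension A' B' D) : ∃ P, IsExtension A P B' ∧ IsExtension A' P B := by
  obtain ⟨f, g, w, hS⟩ := h
  obtain ⟨f', g', w', hS'⟩ := h'
  have sq := IsPullback.of_hasPullback g g'
  exact ⟨pullback g g', isExtension_of_isPullback hS sq, isExtension_of_isPullback hS' sq.flip⟩

lemma IsExtension.exists_preimage {K E G H L : C} (h : IsExtension K E G)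
    (h' : IsExtension H G L) : ∃ P, IsExtension K P H ∧ IsExtension P E L := by
  obtain ⟨f, g, w, hS⟩ := h
  obtain ⟨f', g', w', hS'⟩ := h'
  have := hS.epi_g
  have := hS'.mono_f
  have := hS'.epi_g
  have sq := IsPullback.of_hasPullback g f'
  refine ⟨pullback g f', isExtension_of_isPullback hS sq,
    .of_shortExact (S := .mk (pullback.fst g f') (g ≫ g') ?_) (.mk' ?_ ?_ ?_)⟩
  · rw [pullback.condition_assoc, w', comp_zero]
  · refine ShortComplex.exact_of_f_is_kernel _
      (KernelFork.IsLimit.ofι' _ _ fun {W} x (hx : x ≫ g ≫ g' = 0) => ?_)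
    refine ⟨pullback.lift x (hS'.exact.lift (x ≫ g) ?_) (hS'.exact.lift_f _ _).symm,
      pullback.lift_fst _ _ _⟩
    rwa [Category.assoc]
  · infer_instance
  · dsimp; infer_instance

lemma IsExtension.injective {A B D : C} (h : IsExtension A B D) [Injective A] [Injective D] :
    Injective B := by
  obtain ⟨f, g, w, hS⟩ := h
  exact injective_iff_hasInjectiveDimensionLT_one.mpr
    (hS.hasInjectiveDimensionLT_X₂ 1 inferInstance inferInstance)

end Extensions

section Ext

variable [HasExt.{w} C]

/-- The objects `X` with `Ext^i(W, X) = 0` for all `i ≥ 1` and all `W` satisfying `P`. -/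
def ExtRightOrthogonal (P : C → Prop) (X : C) : Prop :=
  ∀ W, P W → ∀ n : ℕ, Subsingleton (Abelian.Ext W X (n + 1))

/-- The objects `X` with `Ext^i(X, Y) = 0` for all `i ≥ 1` and all `Y` satisfying `P`. -/
def ExtLeftOrthogonal (P : C → Prop) (X : C) : Prop :=
  ∀ Y, P Y → ∀ n : ℕ, Subsingleton (Abelian.Ext X Y (n + 1))

section LongExactSequence

lemma IsExtension.subsingleton_ext_middle {A B D : C} (h : IsExtension A B D) (W : C) (n : ℕ)
    [Subsingleton (Abelian.Ext W A n)] [Subsingleton (Abelian.Ext W D n)] :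
    Subsingleton (Abelian.Ext W B n) := by
  obtain ⟨f, g, w, hS⟩ := h
  refine subsingleton_of_forall_eq 0 fun x => ?_
  obtain ⟨y, rfl⟩ := Abelian.Ext.covariant_sequence_exact₂ W hS x (Subsingleton.elim _ _)
  rw [Subsingleton.elim y 0, Abelian.Ext.zero_comp]

lemma IsExtension.subsingleton_ext_left {A B D : C} (h : IsExtension A B D) (W : C) (n : ℕ)
    [Subsingleton (Abelian.Ext W D n)] [Subsingleton (Abelian.Ext W B (n + 1))] :
    Subsingleton (Abelian.Ext W A (n + 1)) := by
  obtain ⟨f, g, w, hS⟩ := h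
  refine subsingleton_of_forall_eq 0 fun x => ?_
  obtain ⟨y, rfl⟩ := Abelian.Ext.covariant_sequence_exact₁ W hS x (Subsingleton.elim _ _) rfl
  rw [Subsingleton.elim y 0, Abelian.Ext.zero_comp]

lemma IsExtension.subsingleton_ext_right {A B D : C} (h : IsExtension A B D) (W : C) (n : ℕ)
    [Subsingleton (Abelian.Ext W B n)] [Subsingleton (Abelian.Ext W A (n + 1))] :
    Subsingleton (Abelian.Ext W D n) := by
  obtain ⟨f, g, w, hS⟩ := h
  refine subsingleton_of_forall_eq 0 fun x => ?_
  obtain ⟨y, rfl⟩ := Abelian.Ext.covariant_sequence_exact₃ W hS x rfl (Subsingleton.elim _ _)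
  rw [Subsingleton.elim y 0, Abelian.Ext.zero_comp]

lemma IsExtension.subsingleton_ext_contravariant_left {A B D : C} (h : IsExtension A B D) (Y : C)
    (n : ℕ) [Subsingleton (Abelian.Ext B Y n)] [Subsingleton (Abelian.Ext D Y (n + 1))] :
    Subsingleton (Abelian.Ext A Y n) := by
  obtain ⟨f, g, w, hS⟩ := h
  refine subsingleton_of_forall_eq 0 fun x => ?_
  obtain ⟨y, rfl⟩ := Abelian.Ext.contravariant_sequence_exact₁ hS Y x (Nat.add_comm 1 n)
    (Subsingleton.elim _ _)
  rw [Subsingleton.elim y 0, Abelian.Ext.comp_zero]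

lemma subsingleton_ext_of_retract {X Y : C} (r : Retract X Y) (W : C) (n : ℕ)
    [Subsingleton (Abelian.Ext W Y n)] : Subsingleton (Abelian.Ext W X n) := by
  refine subsingleton_of_forall_eq 0 fun x => ?_
  rw [← Abelian.Ext.comp_mk₀_id x, ← r.retract, ← Abelian.Ext.mk₀_comp_mk₀,
    ← Abelian.Ext.comp_assoc_of_third_deg_zero, Subsingleton.elim (x.comp _ _) 0,
    Abelian.Ext.zero_comp]

variable {A B D : C} {f : A ⟶ B} {g : B ⟶ D} {w : f ≫ g = 0}
  (hS : (ShortComplex.mk f g w).ShortExact)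

include hS

lemma exists_lift_of_subsingleton_ext {W : C} [Subsingleton (Abelian.Ext W A 1)]
    (k : W ⟶ D) : ∃ l : W ⟶ B, l ≫ g = k := by
  obtain ⟨y, hy⟩ := Abelian.Ext.covariant_sequence_exact₃ W hS (Abelian.Ext.mk₀ k) rfl
    (Subsingleton.elim _ _)
  obtain ⟨l, rfl⟩ := (Abelian.Ext.mk₀_bijective _ _).2 y
  rw [Abelian.Ext.mk₀_comp_mk₀] at hy
  exact ⟨l, (Abelian.Ext.mk₀_bijective _ _).1 hy⟩

lemma exists_extend_of_subsingleton_ext {Y : C} [Subsingleton (Abelian.Ext D Y 1)]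
    (k : A ⟶ Y) : ∃ l : B ⟶ Y, f ≫ l = k := by
  obtain ⟨y, hy⟩ := Abelian.Ext.contravariant_sequence_exact₁ hS Y (Abelian.Ext.mk₀ k) rfl
    (Subsingleton.elim _ _)
  obtain ⟨l, rfl⟩ := (Abelian.Ext.mk₀_bijective _ _).2 y
  rw [Abelian.Ext.mk₀_comp_mk₀] at hy
  exact ⟨l, (Abelian.Ext.mk₀_bijective _ _).1 hy⟩

lemma subsingleton_ext_one_of_exists_lift {W : C} [Subsingleton (Abelian.Ext W B 1)]
    (hlift : ∀ k : W ⟶ D, ∃ l : W ⟶ B, l ≫ g = k) :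
    Subsingleton (Abelian.Ext W A 1) := by
  refine subsingleton_of_forall_eq 0 fun x => ?_
  obtain ⟨y, rfl⟩ := Abelian.Ext.covariant_sequence_exact₁ W hS x (Subsingleton.elim _ _) rfl
  obtain ⟨k, rfl⟩ := (Abelian.Ext.mk₀_bijective _ _).2 y
  obtain ⟨l, rfl⟩ := hlift k
  rw [← Abelian.Ext.mk₀_comp_mk₀, Abelian.Ext.comp_assoc_of_second_deg_zero,
    hS.comp_extClass, Abelian.Ext.comp_zero]

end LongExactSequence

lemma IsExtension.swap {A B D : C} (h : IsExtension A B D)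
    [Subsingleton (Abelian.Ext D A 1)] : IsExtension D B A := by
  obtain ⟨f, g, w, hS⟩ := h
  obtain ⟨s, hs⟩ := exists_lift_of_subsingleton_ext hS (𝟙 D)
  let σ := ShortComplex.Splitting.ofExactOfSection _ hS.exact s hs hS.mono_f
  let τ : (ShortComplex.mk σ.s σ.r σ.s_r).Splitting :=
    { r := g
      s := f
      f_r := σ.s_g
      s_g := σ.f_r
      id := by rw [add_comm]; exact σ.id }
  exact .of_shortExact τ.shortExact

section Orthogonal

variable {P : C → Prop}

lemma ExtRightOrthogonal.extension {A B D : C} (h : IsExtension A B D)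
    (hA : ExtRightOrthogonal P A) (hD : ExtRightOrthogonal P D) :
    ExtRightOrthogonal P B := fun W hW n =>
  have := hA W hW n
  have := hD W hW n
  h.subsingleton_ext_middle W (n + 1)

lemma ExtRightOrthogonal.cosyzygy {K X : C} (h : IsCosyzygy K X)
    (hK : ExtRightOrthogonal P K) : ExtRightOrthogonal P X := fun W hW n =>
  let ⟨E, _, hE⟩ := h
  have := Abelian.Ext.subsingleton_of_injective W E n
  have := hK W hW (n + 1)
  hE.subsingleton_ext_right W (n + 1)

lemma ExtRightOrthogonal.retract {X Y : C} (r : Retract X Y) (hY : ExtRightOrthogonal P Y) :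
    ExtRightOrthogonal P X := fun W hW n =>
  have := hY W hW n
  subsingleton_ext_of_retract r W (n + 1)

lemma ExtRightOrthogonal.exists_isCosyzygy [EnoughInjectives C] {X : C}
    (hX : ExtRightOrthogonal P X) : ∃ Y, ExtRightOrthogonal P Y ∧ IsCosyzygy X Y :=
  have h : IsCosyzygy X (cokernel (Injective.ι X)) :=
    ⟨Injective.under X, inferInstance, isExtension_cokernel _⟩
  ⟨_, hX.cosyzygy h, h⟩

lemma ExtLeftOrthogonal.of_isZero {X : C} (hX : IsZero X) : ExtLeftOrthogonal P X :=
  fun Y _ n =>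
  have := hX.projective
  Abelian.Ext.subsingleton_of_projective X Y n

lemma ExtLeftOrthogonal.left_of_extension {A B D : C} (h : IsExtension A B D)
    (hB : ExtLeftOrthogonal P B) (hD : ExtLeftOrthogonal P D) :
    ExtLeftOrthogonal P A := fun Y hY n =>
  have := hB Y hY n
  have := hD Y hY (n + 1)
  h.subsingleton_ext_contravariant_left Y (n + 1)

end Orthogonal

/-- `X` is Gorenstein injective relative to the test class `𝒯`, in coinductive form: `X` belongs to
a class of `Ext`-orthogonal objects to `𝒯` each of which has a syzygy in the class. -/
def IsRelGorensteinInjective (𝒯 : C → Prop) (X : C) : Prop :=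
  ∃ 𝒞 : C → Prop, 𝒞 X ∧ (∀ Y, 𝒞 Y → ExtRightOrthogonal 𝒯 Y) ∧
    ∀ Y, 𝒞 Y → ∃ K, 𝒞 K ∧ IsCosyzygy K Y

namespace IsRelGorensteinInjective

variable {𝒯 : C → Prop}

lemma extRightOrthogonal {X : C} (hX : IsRelGorensteinInjective 𝒯 X) :
    ExtRightOrthogonal 𝒯 X :=
  let ⟨_, hX, h𝒞, _⟩ := hX
  h𝒞 X hX

lemma exists_isCosyzygy {X : C} (hX : IsRelGorensteinInjective 𝒯 X) :
    ∃ K, IsRelGorensteinInjective 𝒯 K ∧ IsCosyzygy K X :=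
  let ⟨𝒞, hX, h𝒞, hsyz⟩ := hX
  let ⟨K, hK, hKX⟩ := hsyz X hX
  ⟨K, ⟨𝒞, hK, h𝒞, hsyz⟩, hKX⟩

lemma extLeftOrthogonal {E : C} (hE : 𝒯 E) :
    ExtLeftOrthogonal (IsRelGorensteinInjective 𝒯) E :=
  fun _ hY n => hY.extRightOrthogonal E hE n

-- As `Ext¹(F, A) = 0`, the pullback `Q` of `B` along `F ⟶ D` splits as `A ⊞ F`, so `E ⟶ A` yields
-- an epimorphism onto `Q`, and hence onto `B`, from an injective `P`.
lemma exists_isCosyzygy_of_extension (h𝒯 : ∀ E : C, Injective E → 𝒯 E) {A B D : C}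
    (h : IsExtension A B D) (hA : IsRelGorensteinInjective 𝒯 A)
    (hD : IsRelGorensteinInjective 𝒯 D) :
    ∃ K N L, IsRelGorensteinInjective 𝒯 K ∧ IsRelGorensteinInjective 𝒯 L ∧
      IsExtension K N L ∧ IsCosyzygy N B := by
  obtain ⟨K, hK, E, hE, hKEA⟩ := hA.exists_isCosyzygy
  obtain ⟨L, hL, F, hF, hLFD⟩ := hD.exists_isCosyzygy
  obtain ⟨Q, hAQF, hLQB⟩ := h.exists_pullback hLFD
  have := hA.extRightOrthogonal F (h𝒯 F hF) 0
  obtain ⟨P, hFPE, hKPQ⟩ := hAQF.swap.exists_pullback hKEA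
  obtain ⟨N, hKNL, hNPB⟩ := hKPQ.exists_preimage hLQB
  exact ⟨K, N, L, hK, hL, hKNL, P, hFPE.injective, hNPB⟩

lemma extension (h𝒯 : ∀ E : C, Injective E → 𝒯 E) {A B D : C} (h : IsExtension A B D)
    (hA : IsRelGorensteinInjective 𝒯 A) (hD : IsRelGorensteinInjective 𝒯 D) :
    IsRelGorensteinInjective 𝒯 B := by
  refine ⟨fun B => ∃ A D, IsRelGorensteinInjective 𝒯 A ∧ IsRelGorensteinInjective 𝒯 D ∧
    IsExtension A B D, ⟨A, D, hA, hD, h⟩, ?_, ?_⟩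
  · rintro B ⟨A, D, hA, hD, h⟩
    exact .extension h hA.extRightOrthogonal hD.extRightOrthogonal
  · rintro B ⟨A, D, hA, hD, h⟩
    obtain ⟨K, N, L, hK, hL, hKNL, hNB⟩ := exists_isCosyzygy_of_extension h𝒯 h hA hD
    exact ⟨N, ⟨K, L, hK, hL, hKNL⟩, hNB⟩

-- For `p : E ⟶ Y` the injective presentation of `Y` with kernel in the class, the pullback of `p`
-- along the idempotent `𝟙 Y - r.r ≫ r.i` is an extension of `Y` by `kernel p`, and it has
-- `kernel (p ≫ r.r)` as a retract.
lemma exists_isCosyzygy_of_retract (h𝒯 : ∀ E : C, Injective E → 𝒯 E) {X Y : C} (r : Retract X Y)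
    (hY : IsRelGorensteinInjective 𝒯 Y) :
    ∃ K Q, IsRelGorensteinInjective 𝒯 Q ∧ Nonempty (Retract K Q) ∧ IsCosyzygy K X := by
  obtain ⟨K, hK, E, hE, f, p, w, hS⟩ := hY.exists_isCosyzygy
  have : Epi p := hS.epi_g
  have sq := IsPullback.of_hasPullback p (𝟙 Y - r.r ≫ r.i)
  have hr : (𝟙 Y - r.r ≫ r.i) ≫ r.r = 0 := by simp
  have hι : (kernel.ι (p ≫ r.r) ≫ p) ≫ r.r = 0 := by simp
  refine ⟨kernel (p ≫ r.r), pullback p (𝟙 Y - r.r ≫ r.i),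
    hK.extension h𝒯 (isExtension_of_isPullback hS sq) hY, ⟨?_⟩, E, hE, isExtension_kernel _⟩
  exact
    { i := sq.lift (kernel.ι (p ≫ r.r)) (kernel.ι (p ≫ r.r) ≫ p) <| by
        rw [Preadditive.comp_sub, Category.comp_id, ← Category.assoc _ r.r, hι, zero_comp, sub_zero]
      r := kernel.lift (p ≫ r.r) (pullback.fst _ _) <| by
        rw [pullback.condition_assoc, hr, comp_zero]
      retract := (cancel_mono (kernel.ι (p ≫ r.r))).mp <| by
        rw [Category.assoc, kernel.lift_ι, sq.lift_fst, Category.id_comp] }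

lemma retract (h𝒯 : ∀ E : C, Injective E → 𝒯 E) {X Y : C} (r : Retract X Y)
    (hY : IsRelGorensteinInjective 𝒯 Y) : IsRelGorensteinInjective 𝒯 X := by
  refine ⟨fun X => ∃ Y, IsRelGorensteinInjective 𝒯 Y ∧ Nonempty (Retract X Y),
    ⟨Y, hY, ⟨r⟩⟩, ?_, ?_⟩
  · rintro X ⟨Y, hY, ⟨r⟩⟩
    exact .retract r hY.extRightOrthogonal
  · rintro X ⟨Y, hY, ⟨r⟩⟩
    obtain ⟨K, Q, hQ, hKQ, hKX⟩ := exists_isCosyzygy_of_retract h𝒯 r hY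
    exact ⟨K, ⟨Q, hQ, hKQ⟩, hKX⟩

end IsRelGorensteinInjective

/-- The special `𝒢`-preenvelopes of relative homological algebra: `M` embeds into an object of `𝒢`
with a cokernel that is `Ext`-orthogonal to `𝒢`. -/
def HasSpecialPreenvelope (𝒢 : C → Prop) (M : C) : Prop :=
  ∃ G L, 𝒢 G ∧ ExtLeftOrthogonal 𝒢 L ∧ IsExtension M G L

lemma HasSpecialPreenvelope.of_isExtension {𝒯 : C → Prop} (h𝒯 : ∀ E : C, Injective E → 𝒯 E)
    {M G₀ D : C} (h : IsExtension M G₀ D) (hG₀ : IsRelGorensteinInjective 𝒯 G₀)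
    (hD : HasSpecialPreenvelope (IsRelGorensteinInjective 𝒯) D) :
    HasSpecialPreenvelope (IsRelGorensteinInjective 𝒯) M := by
  obtain ⟨G₁, L, hG₁, hL, hDG₁L⟩ := hD
  obtain ⟨K, hK, E, hE, hKEG₁⟩ := hG₁.exists_isCosyzygy
  obtain ⟨P, hKPD, hPEL⟩ := hKEG₁.exists_preimage hDG₁L
  obtain ⟨Q, hMQP, hKQG₀⟩ := h.exists_pullback hKPD
  exact ⟨Q, P, hK.extension h𝒯 hKQG₀ hG₀,
    .left_of_extension hPEL (IsRelGorensteinInjective.extLeftOrthogonal (h𝒯 E hE)) hL, hMQP⟩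

end Ext
end Abelian

section Chains

variable {α : Type*} {r : α → α → Prop} {P Q : α → Prop}

lemma exists_nat_chain (hnext : ∀ a, P a → ∃ b, P b ∧ r a b) {a : α} (ha : P a) :
    ∃ x : ℕ → α, x 0 = a ∧ ∀ n, P (x n) ∧ r (x n) (x (n + 1)) := by
  have : Nonempty α := ⟨a⟩
  choose! next hP hr using hnext
  have hP' (n : ℕ) : P (next^[n] a) := by
    induction n with
    | zero => exact ha
    | succ n ih => exact Function.iterate_succ_apply' next n a ▸ hP _ ih
  refine ⟨fun n => next^[n] a, rfl, fun n => ⟨hP' n, ?_⟩⟩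
  change r (next^[n] a) (next^[n + 1] a)
  rw [Function.iterate_succ_apply']
  exact hr _ (hP' n)

lemma exists_int_chain (hPQ : ∀ a, P a → Q a) (hprev : ∀ a, P a → ∃ b, P b ∧ r b a)
    (hnext : ∀ a, Q a → ∃ b, Q b ∧ r a b) {a : α} (ha : P a) :
    ∃ z : ℤ → α, z 0 = a ∧ ∀ n, Q (z n) ∧ r (z n) (z (n + 1)) := by
  obtain ⟨x, hx0, hx⟩ := exists_nat_chain hnext (hPQ a ha)
  obtain ⟨y, hy0, hy⟩ := exists_nat_chain (r := fun a b => r b a) hprev ha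
  let z : ℤ → α
    | Int.ofNat k => x k
    | Int.negSucc k => y (k + 1)
  refine ⟨z, hx0, ?_⟩
  rintro (k | (_ | k))
  · exact hx k
  · exact ⟨hPQ _ (hy 1).1, show r (y 1) (x 0) from hx0.trans hy0.symm ▸ (hy 0).2⟩
  · exact ⟨hPQ _ (hy (k + 2)).1, (hy (k + 1)).2⟩

lemma exact_comp_of_surjective_of_injective {M M' N L L' : Type*} [Zero L] [Zero L'] {f : M → N}
    {g : N → L} {p : M' → M} {i : L → L'} (h : Function.Exact f g) (hp : Function.Surjective p)
    (hi : Function.Injective i) (hi0 : i 0 = 0) : Function.Exact (f ∘ p) (i ∘ g) := fun x => by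
  rw [Function.comp_apply, ← hi0, hi.eq_iff, h x, hp.range_comp]

end Chains

section Modules

variable {R} {A B D : ModuleCat.{u} R} {f : A →ₗ[R] B} {g : B →ₗ[R] D}

namespace ShortExactSeq

lemma comp_eq_zero (h : ShortExactSeq R A B D f g) : g.comp f = 0 :=
  h.2.2.linearMap_comp_eq_zero

lemma shortExact (h : ShortExactSeq R A B D f g) :
    (ShortComplex.moduleCatMk f g h.comp_eq_zero).ShortExact :=
  ModuleCat.shortComplex_shortExact _ h.2.2 h.1 h.2.1

lemma isExtension (h : ShortExactSeq R A B D f g) : IsExtension A B D :=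
  .of_shortExact h.shortExact

lemma exact_comp_left (h : ShortExactSeq R A B D f g) (W : ModuleCat.{u} R) :
    Function.Exact (fun k : W →ₗ[R] A => f.comp k) (fun k : W →ₗ[R] B => g.comp k) := fun k => by
  constructor
  · intro hk
    have := h.shortExact.mono_f
    exact ⟨(h.shortExact.exact.lift (ModuleCat.ofHom k) (ModuleCat.hom_ext hk)).hom,
      congrArg ModuleCat.Hom.hom (h.shortExact.exact.lift_f _ _)⟩
  · rintro ⟨l, rfl⟩
    exact (LinearMap.comp_assoc l f g).symm.trans (by rw [h.comp_eq_zero, LinearMap.zero_comp])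

lemma exact_comp_right (h : ShortExactSeq R A B D f g) (X : ModuleCat.{u} R) :
    Function.Exact (fun k : D →ₗ[R] X => k.comp g) (fun k : B →ₗ[R] X => k.comp f) := fun k => by
  constructor
  · intro hk
    have := h.shortExact.epi_g
    exact ⟨(h.shortExact.exact.desc (ModuleCat.ofHom k) (ModuleCat.hom_ext hk)).hom,
      congrArg ModuleCat.Hom.hom (h.shortExact.exact.g_desc _ _)⟩
  · rintro ⟨l, rfl⟩
    exact (LinearMap.comp_assoc f g l).trans (by rw [h.comp_eq_zero, LinearMap.comp_zero])

lemma surjective_comp_left (h : ShortExactSeq R A B D f g) (W : ModuleCat.{u} R)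
    [Subsingleton (Abelian.Ext W A 1)] :
    Function.Surjective (fun k : W →ₗ[R] B => g.comp k) := fun k =>
  let ⟨l, hl⟩ := exists_lift_of_subsingleton_ext h.shortExact (W := W) (ModuleCat.ofHom k)
  ⟨l.hom, congrArg ModuleCat.Hom.hom hl⟩

lemma surjective_comp_right (h : ShortExactSeq R A B D f g) (X : ModuleCat.{u} R)
    [Subsingleton (Abelian.Ext D X 1)] :
    Function.Surjective (fun k : B →ₗ[R] X => k.comp f) := fun k =>
  let ⟨l, hl⟩ := exists_extend_of_subsingleton_ext h.shortExact (Y := X) (ModuleCat.ofHom k)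
  ⟨l.hom, congrArg ModuleCat.Hom.hom hl⟩

lemma homContraExact (h : ShortExactSeq R A B D f g) (X : ModuleCat.{u} R)
    [Subsingleton (Abelian.Ext D X 1)] : HomContraExact R X f g :=
  ⟨h.2.1.injective_linearMapComp_right, h.exact_comp_right X, h.surjective_comp_right X⟩

lemma range_subtype (hfg : Function.Exact f g) (hg : Function.Surjective g) :
    ShortExactSeq R (ModuleCat.of R (LinearMap.range f)) B D (LinearMap.range f).subtype g :=
  ⟨Subtype.val_injective, hg, by
    rw [LinearMap.exact_iff, Submodule.range_subtype, hfg.linearMap_ker_eq]⟩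

lemma rangeRestrict (hf : Function.Injective f) (hfg : Function.Exact f g) :
    ShortExactSeq R A B (ModuleCat.of R (LinearMap.range g)) f g.rangeRestrict :=
  ⟨hf, g.surjective_rangeRestrict, by
    rw [LinearMap.exact_iff, LinearMap.ker_rangeRestrict, hfg.linearMap_ker_eq]⟩

end ShortExactSeq

lemma IsExtension.exists_shortExactSeq (h : IsExtension A B D) :
    ∃ (f : A →ₗ[R] B) (g : B →ₗ[R] D), ShortExactSeq R A B D f g := by
  obtain ⟨f, g, w, hS⟩ := h
  exact ⟨f.hom, g.hom, hS.moduleCat_injective_f, hS.moduleCat_surjective_g,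
    (ShortComplex.ShortExact.moduleCat_exact_iff_function_exact _).mp hS.exact⟩

lemma IsCosyzygy.exists_shortExactSeq {K X : ModuleCat.{u} R} (h : IsCosyzygy K X) :
    ∃ (E : ModuleCat.{u} R) (f : K →ₗ[R] E) (g : E →ₗ[R] X),
      Module.Injective R E ∧ ShortExactSeq R K E X f g := by
  obtain ⟨E, hE, hKEX⟩ := h
  obtain ⟨f, g, hfg⟩ := hKEX.exists_shortExactSeq
  exact ⟨E, f, g, (Module.injective_iff_injective_object R E).mpr hE, hfg⟩

section Complexes

variable {𝒯 : ModuleCat.{u} R → Prop}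

lemma GorensteinRelInjective.of_isCosyzygy (Z : ℤ → ModuleCat.{u} R)
    (hZ : ∀ n, ExtRightOrthogonal 𝒯 (Z n)) (hs : ∀ n, IsCosyzygy (Z n) (Z (n + 1))) :
    GorensteinRelInjective R 𝒯 (Z 1) := by
  choose I ι π hI hs using fun n => (hs n).exists_shortExactSeq
  refine ⟨I, fun n => (ι (n + 1)).comp (π n), π 0, ⟨hI, fun n => ?_, fun W hW n => ?_⟩,
    (hs 0).2.1, ?_⟩
  · exact exact_comp_of_surjective_of_injective (p := π n) (i := ι (n + 1 + 1)) (hs (n + 1)).2.2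
      (hs n).2.1 (hs (n + 1 + 1)).1 (map_zero _)
  · have := hZ n W hW 0
    exact exact_comp_of_surjective_of_injective ((hs (n + 1)).exact_comp_left W)
      ((hs n).surjective_comp_left W) ((hs (n + 1 + 1)).1.injective_linearMapComp_left)
      (LinearMap.comp_zero _)
  · exact exact_comp_of_surjective_of_injective (p := π (-1)) (i := id) (hs 0).2.2 (hs (-1)).2.1
      Function.injective_id rfl

lemma IsRelGorensteinInjective.gorensteinRelInjective {X : ModuleCat.{u} R}
    (hX : IsRelGorensteinInjective 𝒯 X) : GorensteinRelInjective R 𝒯 X := by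
  obtain ⟨z, rfl, hz⟩ := exists_int_chain (fun _ => extRightOrthogonal)
    (fun _ => exists_isCosyzygy) (fun _ => ExtRightOrthogonal.exists_isCosyzygy) hX
  refine GorensteinRelInjective.of_isCosyzygy (fun n => z (n - 1)) (fun n => (hz _).1) fun n => ?_
  simpa only [sub_add_cancel, add_sub_cancel_right] using (hz (n - 1)).2

namespace IsTotallyAcyclicInjComplex

variable {I : ℤ → ModuleCat.{u} R} {d : ∀ n : ℤ, I n →ₗ[R] I (n + 1)}

lemma isCosyzygy_range (h : IsTotallyAcyclicInjComplex R 𝒯 I d) {n : ℤ} {X : ModuleCat.{u} R}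
    {π : I (n + 1) →ₗ[R] X} (hdπ : Function.Exact (d n) π) (hπ : Function.Surjective π) :
    IsCosyzygy (ModuleCat.of R (LinearMap.range (d n))) X :=
  ⟨I (n + 1), (Module.injective_iff_injective_object R _).mp (h.1 _),
    (ShortExactSeq.range_subtype hdπ hπ).isExtension⟩

lemma exact_rangeRestrict (h : IsTotallyAcyclicInjComplex R 𝒯 I d) (n : ℤ) :
    Function.Exact (d n) (d (n + 1)).rangeRestrict := by
  rw [LinearMap.exact_iff, LinearMap.ker_rangeRestrict, (h.2.1 n).linearMap_ker_eq]

lemma extRightOrthogonal_range (h : IsTotallyAcyclicInjComplex R 𝒯 I d) (n : ℤ) :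
    ExtRightOrthogonal 𝒯 (ModuleCat.of R (LinearMap.range (d n))) := by
  intro W hW i
  have hs (n : ℤ) := ShortExactSeq.range_subtype
    (D := ModuleCat.of R (LinearMap.range (d (n + 1)))) (h.exact_rangeRestrict n)
    (d (n + 1)).surjective_rangeRestrict
  have hI (n : ℤ) : Injective (I n) := (Module.injective_iff_injective_object R _).mp (h.1 n)
  have (n : ℤ) (i : ℕ) : Subsingleton (Abelian.Ext W (I n) (i + 1)) :=
    Abelian.Ext.subsingleton_of_injective W _ i
  induction i generalizing n with
  | zero =>
    refine subsingleton_ext_one_of_exists_lift (hs n).shortExact fun k => ?_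
    obtain ⟨l, hl⟩ := (h.2.2 W hW (n + 1) ((LinearMap.range (d (n + 1))).subtype.comp k.hom)).mp
      (LinearMap.ext fun w => (h.2.1 (n + 1) _).mpr (k.hom w).2)
    exact ⟨ModuleCat.ofHom l,
      ModuleCat.hom_ext (LinearMap.ext fun w => Subtype.ext (LinearMap.congr_fun hl w))⟩
  | succ i ih =>
    have := ih (n + 1)
    exact (hs n).isExtension.subsingleton_ext_left W (i + 1)

lemma isRelGorensteinInjective (h : IsTotallyAcyclicInjComplex R 𝒯 I d) {n : ℤ}
    {X : ModuleCat.{u} R} {π : I (n + 1) →ₗ[R] X} (hdπ : Function.Exact (d n) π)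
    (hπ : Function.Surjective π) : IsRelGorensteinInjective 𝒯 X := by
  refine ⟨fun Y => ∃ (n : ℤ) (π : I (n + 1) →ₗ[R] Y), Function.Exact (d n) π ∧
    Function.Surjective π, ⟨n, π, hdπ, hπ⟩, ?_, ?_⟩
  · rintro Y ⟨n, π, hdπ, hπ⟩
    exact (h.extRightOrthogonal_range n).cosyzygy (h.isCosyzygy_range hdπ hπ)
  · rintro Y ⟨n, π, hdπ, hπ⟩
    obtain ⟨m, rfl⟩ : ∃ m, n = m + 1 := ⟨n - 1, (sub_add_cancel n 1).symm⟩
    exact ⟨_, ⟨m, _, h.exact_rangeRestrict m, LinearMap.surjective_rangeRestrict _⟩,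
      h.isCosyzygy_range hdπ hπ⟩

end IsTotallyAcyclicInjComplex

lemma gorensteinRelInjective_iff {X : ModuleCat.{u} R} :
    GorensteinRelInjective R 𝒯 X ↔ IsRelGorensteinInjective 𝒯 X :=
  ⟨fun ⟨_, _, _, h, hπ, hdπ⟩ => h.isRelGorensteinInjective (n := -1) hdπ hπ,
    fun h => h.gorensteinRelInjective⟩

end Complexes

section FiniteDimension

variable {𝒯 : ModuleCat.{u} R → Prop}

variable (R) in
/-- `M` has Gorenstein injective dimension at most `k` relative to the test class `𝒯`; for weak
injective test modules this unfolds to `GwidLE R M k`. -/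
def GorensteinRelInjectiveDimLE (𝒯 : ModuleCat.{u} R → Prop) (M : ModuleCat.{u} R) (k : ℕ) :
    Prop :=
  ∃ (G : ℕ → ModuleCat.{u} R) (d : ∀ i, G i →ₗ[R] G (i + 1)) (ε : M →ₗ[R] G 0),
    IsFiniteCoresolution R M k G d ε ∧ ∀ i, GorensteinRelInjective R 𝒯 (G i)

lemma IsFiniteCoresolution.range {M : ModuleCat.{u} R} {k : ℕ} {G : ℕ → ModuleCat.{u} R}
    {d : ∀ i, G i →ₗ[R] G (i + 1)} {ε : M →ₗ[R] G 0}
    (h : IsFiniteCoresolution R M (k + 1) G d ε) :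
    IsFiniteCoresolution R (ModuleCat.of R (LinearMap.range (d 0))) k (fun i => G (i + 1))
      (fun i => d (i + 1)) (LinearMap.range (d 0)).subtype := by
  obtain ⟨-, -, hd, hzero⟩ := h
  refine ⟨Subtype.val_injective, ?_, fun i => hd (i + 1), fun i hi => hzero (i + 1) (by omega)⟩
  rw [LinearMap.exact_iff, Submodule.range_subtype, (hd 0).linearMap_ker_eq]

lemma GorensteinRelInjectiveDimLE.hasSpecialPreenvelope
    (h𝒯 : ∀ E : ModuleCat.{u} R, Injective E → 𝒯 E) {M : ModuleCat.{u} R} {k : ℕ}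
    (h : GorensteinRelInjectiveDimLE R 𝒯 M k) :
    HasSpecialPreenvelope (IsRelGorensteinInjective 𝒯) M := by
  induction k generalizing M with
  | zero =>
    obtain ⟨G, d, ε, ⟨hε, hεd, -, hzero⟩, hG⟩ := h
    have : Subsingleton (G 1) := subsingleton_of_forall_eq 0 (hzero 1 one_pos)
    exact ⟨G 0, _, gorensteinRelInjective_iff.mp (hG 0),
      .of_isZero (ModuleCat.isZero_of_subsingleton _),
      (ShortExactSeq.rangeRestrict hε hεd).isExtension⟩
  | succ k ih =>
    obtain ⟨G, d, ε, hres, hG⟩ := h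
    exact .of_isExtension h𝒯 (ShortExactSeq.rangeRestrict hres.1 hres.2.1).isExtension
      (gorensteinRelInjective_iff.mp (hG 0)) (ih ⟨_, _, _, hres.range, fun i => hG (i + 1)⟩)

end FiniteDimension

section Copure

variable (R) in
/-- A short exact sequence `0 → A → B → D → 0` is copure relative to a class `𝒢` of modules if
`Hom(-, X)` keeps it exact for every `X` in `𝒢`; for Gorenstein weak injective modules this unfolds
to `GWICopureExact R f g`. -/
def RelCopureExact (𝒢 : ModuleCat.{u} R → Prop) (f : A →ₗ[R] B) (g : B →ₗ[R] D) : Prop :=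
  ShortExactSeq R A B D f g ∧ ∀ X : ModuleCat.{u} R, 𝒢 X → HomContraExact R X f g

lemma ShortExactSeq.relCopureExact {𝒢 : ModuleCat.{u} R → Prop} (h : ShortExactSeq R A B D f g)
    (hD : ExtLeftOrthogonal 𝒢 D) : RelCopureExact R 𝒢 f g :=
  ⟨h, fun X hX => have := hD X hX 0; h.homContraExact X⟩

lemma HomContraExact.exists_retraction (h : HomContraExact R A f g) :
    ∃ r : B →ₗ[R] A, r.comp f = LinearMap.id :=
  h.2.2 LinearMap.id

lemma HasSpecialPreenvelope.exists_retract {𝒢 : ModuleCat.{u} R → Prop} {M : ModuleCat.{u} R}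
    (hM : HasSpecialPreenvelope 𝒢 M)
    (hsplit : ∀ (N L : ModuleCat.{u} R) (f : M →ₗ[R] N) (g : N →ₗ[R] L),
      RelCopureExact R 𝒢 f g → ∃ r : N →ₗ[R] M, r.comp f = LinearMap.id) :
    ∃ G, 𝒢 G ∧ Nonempty (Retract M G) := by
  obtain ⟨G, L, hG, hL, hMGL⟩ := hM
  obtain ⟨f, g, hfg⟩ := hMGL.exists_shortExactSeq
  obtain ⟨r, hr⟩ := hsplit G L f g (hfg.relCopureExact hL)
  exact ⟨G, hG, ⟨⟨ModuleCat.ofHom f, ModuleCat.ofHom r, ModuleCat.hom_ext hr⟩⟩⟩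

end Copure

lemma WeakInjective.of_injective {E : ModuleCat.{u} R} (hE : Module.Injective R E) :
    WeakInjective R E := by
  intro N _
  have : Injective E := (Module.injective_iff_injective_object R E).mp hE
  let P := ProjectiveResolution.of N
  refine ModuleCat.subsingleton_of_isZero (Limits.IsZero.of_iso ?_ (P.isoExt 1 E))
  rw [← HomologicalComplex.exactAt_iff_isZero_homology,
    HomologicalComplex.exactAt_iff' _ 0 1 2 (by simp) (by simp), ShortComplex.moduleCat_exact_iff]
  intro (x : P.complex.X 1 ⟶ E) (hx : P.complex.d 2 1 ≫ x = 0)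
  have hexact : (P.complex.sc' 2 1 0).Exact := by
    rw [← HomologicalComplex.exactAt_iff' _ 2 1 0 (by simp) (by simp)]
    exact P.complex_exactAt_succ 0
  exact ⟨hexact.descToInjective x hx, hexact.comp_descToInjective x hx⟩

end Modules

theorem gorensteinWeakInjective_iff_copure_general (𝒯 : ModuleCat.{u} R → Prop)
    (h𝒯 : ∀ E : ModuleCat.{u} R, Module.Injective R E → 𝒯 E) (M : ModuleCat.{u} R)
    (hfin : ∃ k : ℕ, GorensteinRelInjectiveDimLE R 𝒯 M k) :
    (GorensteinRelInjective R 𝒯 M ↔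
      ∀ (N L : ModuleCat.{u} R) (f : M →ₗ[R] N) (g : N →ₗ[R] L),
        RelCopureExact R (GorensteinRelInjective R 𝒯) f g →
          ∃ r : N →ₗ[R] M, r.comp f = LinearMap.id) ∧
    (GorensteinRelInjective R 𝒯 M ↔
      ∀ (A B C : ModuleCat.{u} R) (f : A →ₗ[R] B) (g : B →ₗ[R] C),
        RelCopureExact R (GorensteinRelInjective R 𝒯) f g → HomContraExact R M f g) := by
  have h𝒯' (E : ModuleCat.{u} R) (hE : Injective E) : 𝒯 E :=
    h𝒯 E ((Module.injective_iff_injective_object R E).mpr hE)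
  obtain ⟨k, hk⟩ := hfin
  rw [show GorensteinRelInjective R 𝒯 = IsRelGorensteinInjective 𝒯 from
    funext fun _ => propext gorensteinRelInjective_iff]
  have of_split (hsplit : ∀ (N L : ModuleCat.{u} R) (f : M →ₗ[R] N) (g : N →ₗ[R] L),
      RelCopureExact R (IsRelGorensteinInjective 𝒯) f g →
        ∃ r : N →ₗ[R] M, r.comp f = LinearMap.id) : IsRelGorensteinInjective 𝒯 M := by
    obtain ⟨G, hG, ⟨r⟩⟩ := (hk.hasSpecialPreenvelope h𝒯').exists_retract hsplit
    exact hG.retract h𝒯' r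
  exact ⟨⟨fun h N L f g hfg => (hfg.2 M h).exists_retraction, of_split⟩,
    ⟨fun h A B C f g hfg => hfg.2 M h,
      fun h => of_split fun N L f g hfg => (h M N L f g hfg).exists_retraction⟩⟩

/-- For `M` of finite Gorenstein weak injective dimension: `M` is Gorenstein weak
injective iff every `GWI`-copure exact sequence `0 → M → N → L → 0` splits, iff
`Hom_R(-, M)` is exact on every `GWI`-copure exact sequence. -/
theorem gorensteinWeakInjective_iff_copure (M : ModuleCat.{u} R)
    (hfin : ∃ k : ℕ, GwidLE R M k) :
    (GorensteinWeakInjective R M ↔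
      ∀ (N L : ModuleCat.{u} R) (f : M →ₗ[R] N) (g : N →ₗ[R] L),
        GWICopureExact R f g → ∃ r : N →ₗ[R] M, r.comp f = LinearMap.id) ∧
    (GorensteinWeakInjective R M ↔
      ∀ (A B C : ModuleCat.{u} R) (f : A →ₗ[R] B) (g : B →ₗ[R] C),
        GWICopureExact R f g → HomContraExact R M f g) :=
  gorensteinWeakInjective_iff_copure_general R (WeakInjective R) (fun _ => .of_injective) M hfin
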